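/- arXiv:2011.09495 — 8 statements merged into one kernel-verified Lean document; each statement's English description precedes it below -/
import Mathlib

section
/- Let ℓ ≥ 1 be an integer and let p ∈ (0, π) satisfy sin(ℓp) ≠ 0. Then f_ℓ is differentiable at p with f_ℓ'(p) ≤ 0; moreover, if additionally sin((ℓ+1)p) ≠ 0, then f_ℓ'(p) = f_ℓ(p)·((ℓ+1)·cot((ℓ+1)p) − ℓ·cot(ℓp)). -/
/-- `f ℓ p = sin((ℓ+1)p) / sin(ℓp)`. -/
noncomputable def quasiF (ℓ : ℕ) (p : ℝ) : ℝ :=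
  Real.sin ((ℓ + 1) * p) / Real.sin (ℓ * p)

/-!
The numerator of `f_ℓ'` simplifies, by the subtraction formula
`sin((ℓ+1)p) cos(ℓp) - cos((ℓ+1)p) sin(ℓp) = sin p`, to `cos((ℓ+1)p) sin(ℓp) - ℓ sin p`. Since
`|sin(ℓp)| ≤ ℓ |sin p|`, the second term dominates, so the numerator has the sign of `-sin p`.
-/

open Real

theorem hasDerivAt_sin_mul (a x : ℝ) :
    HasDerivAt (fun y => sin (a * y)) (cos (a * x) * a) x :=
  (hasDerivAt_const_mul a).sin

theorem hasDerivAt_sin_mul_div_sin_mul (a : ℝ) {b x : ℝ} (hb : sin (b * x) ≠ 0) :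
    HasDerivAt (fun y => sin (a * y) / sin (b * y))
      ((a * cos (a * x) * sin (b * x) - b * sin (a * x) * cos (b * x)) / sin (b * x) ^ 2) x :=
  ((hasDerivAt_sin_mul a x).fun_div (hasDerivAt_sin_mul b x) hb).congr_deriv (by ring)

theorem deriv_sin_mul_div_sin_mul_eq_mul_cot_sub_cot {a b x : ℝ}
    (ha : sin (a * x) ≠ 0) (hb : sin (b * x) ≠ 0) :
    deriv (fun y => sin (a * y) / sin (b * y)) x =
      sin (a * x) / sin (b * x) *
        (a * (cos (a * x) / sin (a * x)) - b * (cos (b * x) / sin (b * x))) := by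
  rw [(hasDerivAt_sin_mul_div_sin_mul a hb).deriv]
  generalize sin (a * x) = s at *
  generalize sin (b * x) = t at *
  field_simp

theorem add_one_mul_cos_mul_sin_sub_mul_sin_mul_cos (b x : ℝ) :
    (b + 1) * cos ((b + 1) * x) * sin (b * x) - b * sin ((b + 1) * x) * cos (b * x) =
      cos ((b + 1) * x) * sin (b * x) - b * sin x := by
  have sin_eq : sin x = sin ((b + 1) * x) * cos (b * x) - cos ((b + 1) * x) * sin (b * x) := by
    rw [← sin_sub]
    ring_nf
  rw [sin_eq]
  ring

theorem abs_sin_natCast_mul_le (n : ℕ) (x : ℝ) : |sin (n * x)| ≤ n * |sin x| := by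
  induction n with
  | zero => simp
  | succ k ih =>
    calc |sin ((k + 1 : ℕ) * x)|
        = |sin (k * x) * cos x + cos (k * x) * sin x| := by
          rw [← sin_add, Nat.cast_succ, add_one_mul]
      _ ≤ |sin (k * x)| * |cos x| + |cos (k * x)| * |sin x| := by
          simpa only [abs_mul] using abs_add_le (sin (k * x) * cos x) (cos (k * x) * sin x)
      _ ≤ |sin (k * x)| * 1 + 1 * |sin x| := by
          gcongr <;> exact abs_cos_le_one _
      _ ≤ (k + 1 : ℕ) * |sin x| := by
          push_cast
          linarith

theorem sin_mul_cos_mul_sin_natCast_mul_le (n : ℕ) (x y : ℝ) :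
    sin x * (cos y * sin (n * x)) ≤ n * sin x ^ 2 :=
  calc sin x * (cos y * sin (n * x))
      ≤ |sin x| * (|cos y| * |sin (n * x)|) := by
        simpa only [abs_mul] using le_abs_self (sin x * (cos y * sin (n * x)))
    _ ≤ |sin x| * (1 * (n * |sin x|)) := by
        gcongr
        · exact abs_cos_le_one y
        · exact abs_sin_natCast_mul_le n x
    _ = n * sin x ^ 2 := by
        rw [← sq_abs (sin x)]
        ring

theorem hasDerivAt_quasiF {ℓ : ℕ} {p : ℝ} (hs : sin (ℓ * p) ≠ 0) :
    HasDerivAt (quasiF ℓ)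
      ((cos ((ℓ + 1) * p) * sin (ℓ * p) - ℓ * sin p) / sin (ℓ * p) ^ 2) p :=
  (hasDerivAt_sin_mul_div_sin_mul (ℓ + 1) hs).congr_deriv <| by
    rw [add_one_mul_cos_mul_sin_sub_mul_sin_mul_cos]

theorem sin_mul_deriv_quasiF_nonpos {ℓ : ℕ} {p : ℝ} (hs : sin (ℓ * p) ≠ 0) :
    sin p * deriv (quasiF ℓ) p ≤ 0 := by
  rw [(hasDerivAt_quasiF hs).deriv, ← mul_div_assoc]
  refine div_nonpos_of_nonpos_of_nonneg ?_ (sq_nonneg _)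
  linarith [sin_mul_cos_mul_sin_natCast_mul_le ℓ p ((ℓ + 1) * p)]

theorem quasiF_deriv_nonpos_general (ℓ : ℕ) (p : ℝ) (hs : sin (ℓ * p) ≠ 0) :
    DifferentiableAt ℝ (quasiF ℓ) p ∧ sin p * deriv (quasiF ℓ) p ≤ 0 ∧
    (sin ((ℓ + 1) * p) ≠ 0 →
      deriv (quasiF ℓ) p =
        quasiF ℓ p *
          ((ℓ + 1) * (cos ((ℓ + 1) * p) / sin ((ℓ + 1) * p)) -
            ℓ * (cos (ℓ * p) / sin (ℓ * p)))) :=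
  ⟨(hasDerivAt_quasiF hs).differentiableAt, sin_mul_deriv_quasiF_nonpos hs,
    fun hs' => deriv_sin_mul_div_sin_mul_eq_mul_cot_sub_cot hs' hs⟩

theorem quasiF_deriv_nonpos (ℓ : ℕ) (hℓ : 1 ≤ ℓ) (p : ℝ)
    (hp : p ∈ Set.Ioo 0 Real.pi) (hs : Real.sin (ℓ * p) ≠ 0) :
    DifferentiableAt ℝ (quasiF ℓ) p ∧ deriv (quasiF ℓ) p ≤ 0 ∧
    (Real.sin ((ℓ + 1) * p) ≠ 0 →
      deriv (quasiF ℓ) p =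
        quasiF ℓ p *
          ((ℓ + 1) * (Real.cos ((ℓ + 1) * p) / Real.sin ((ℓ + 1) * p)) -
            ℓ * (Real.cos (ℓ * p) / Real.sin (ℓ * p)))) := by
  obtain ⟨hdiff, hsign, hformula⟩ := quasiF_deriv_nonpos_general ℓ p hs
  exact ⟨hdiff, nonpos_of_mul_nonpos_right hsign (sin_pos_of_mem_Ioo hp), hformula⟩
end

section
/- Let ℓ ≥ 1 be an integer and let p ∈ (0, π) satisfy sin(ℓp) ≠ 0 and sin((ℓ+1)p) ≠ 0. Then (ℓ+1)·cot((ℓ+1)p) ≠ ℓ·cot(ℓp). -/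
/-!
Clearing denominators and applying the subtraction formula for the sine, an equality
`(n + 1) cot ((n + 1) x) = n cot (n x)` becomes `cos ((n + 1) x) * sin (n x) = n * sin x`.
Since `|cos ((n + 1) x)| < 1`, this forces `|n| |sin x| < |sin (n x)|`, whereas
`|sin (n x)| ≤ |n| |sin x|` for every integer `n`.
-/

theorem abs_sin_add_le (x y : ℝ) : |Real.sin (x + y)| ≤ |Real.sin x| + |Real.sin y| :=
  calc |Real.sin (x + y)|
      ≤ |Real.sin x| * |Real.cos y| + |Real.cos x| * |Real.sin y| := by
        rw [Real.sin_add, ← abs_mul, ← abs_mul]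
        exact abs_add_le _ _
    _ ≤ |Real.sin x| + |Real.sin y| :=
        add_le_add (mul_le_of_le_one_right (abs_nonneg _) (Real.abs_cos_le_one y))
          (mul_le_of_le_one_left (abs_nonneg _) (Real.abs_cos_le_one x))

theorem abs_sin_nat_mul_le (n : ℕ) (x : ℝ) : |Real.sin (n * x)| ≤ n * |Real.sin x| := by
  induction n with
  | zero => simp
  | succ n ih =>
    push_cast
    rw [add_one_mul, add_one_mul]
    exact (abs_sin_add_le _ _).trans (by gcongr)

theorem abs_sin_int_mul_le (n : ℤ) (x : ℝ) : |Real.sin (n * x)| ≤ |(n : ℝ)| * |Real.sin x| := by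
  obtain ⟨m, rfl | rfl⟩ := n.eq_nat_or_neg <;> simpa using abs_sin_nat_mul_le m x

theorem abs_cos_lt_one_of_sin_ne_zero {x : ℝ} (hx : Real.sin x ≠ 0) : |Real.cos x| < 1 := by
  rw [← sq_lt_one_iff_abs_lt_one, Real.cos_sq']
  exact sub_lt_self 1 (sq_pos_of_ne_zero hx)

theorem add_one_mul_cot_eq_mul_cot_iff {a x : ℝ} (hs : Real.sin (a * x) ≠ 0)
    (hs' : Real.sin ((a + 1) * x) ≠ 0) :
    (a + 1) * (Real.cos ((a + 1) * x) / Real.sin ((a + 1) * x)) =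
        a * (Real.cos (a * x) / Real.sin (a * x)) ↔
      Real.cos ((a + 1) * x) * Real.sin (a * x) = a * Real.sin x := by
  have sin_eq : Real.sin x = Real.sin ((a + 1) * x) * Real.cos (a * x)
      - Real.cos ((a + 1) * x) * Real.sin (a * x) := by
    rw [← Real.sin_sub]
    congr 1
    ring
  rw [← mul_div_assoc, ← mul_div_assoc, div_eq_div_iff hs' hs, sin_eq]
  constructor <;> intro h <;> linarith

theorem cot_combination_ne_general (n : ℤ) (x : ℝ) (hs : Real.sin (n * x) ≠ 0)
    (hs' : Real.sin ((n + 1) * x) ≠ 0) :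
    (n + 1) * (Real.cos ((n + 1) * x) / Real.sin ((n + 1) * x)) ≠
      n * (Real.cos (n * x) / Real.sin (n * x)) := by
  rw [Ne, add_one_mul_cot_eq_mul_cot_iff hs hs']
  intro h
  have abs_lt : |(n : ℝ)| * |Real.sin x| < |Real.sin (n * x)| :=
    calc |(n : ℝ)| * |Real.sin x|
        = |Real.cos ((n + 1) * x)| * |Real.sin (n * x)| := by rw [← abs_mul, ← h, abs_mul]
      _ < |Real.sin (n * x)| :=
          mul_lt_of_lt_one_left (abs_pos.mpr hs) (abs_cos_lt_one_of_sin_ne_zero hs')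
  exact abs_lt.not_ge (abs_sin_int_mul_le n x)

theorem cot_combination_ne (ℓ : ℕ) (hℓ : 1 ≤ ℓ) (p : ℝ)
    (hp : p ∈ Set.Ioo 0 Real.pi) (hs : Real.sin (ℓ * p) ≠ 0)
    (hs' : Real.sin ((ℓ + 1) * p) ≠ 0) :
    (ℓ + 1) * (Real.cos ((ℓ + 1) * p) / Real.sin ((ℓ + 1) * p)) ≠
      ℓ * (Real.cos (ℓ * p) / Real.sin (ℓ * p)) := by
  exact_mod_cast cot_combination_ne_general ℓ p (by exact_mod_cast hs) (by exact_mod_cast hs')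
end

section
/- Let ℓ ≥ 1 be an integer and p ∈ (0, π). Then sin((ℓ+1)p) = sin(ℓp) if and only if p = (2j−1)π/(2ℓ+1) for some integer j with 1 ≤ j ≤ ℓ; and sin((ℓ+1)p) = −sin(ℓp) if and only if p = 2jπ/(2ℓ+1) for some integer j with 1 ≤ j ≤ ℓ. -/
/-!
The sum-to-product formulas turn `sin ((ℓ + 1) * p) ∓ sin (ℓ * p)` into
`2 * sin (p / 2) * cos ((ℓ + 1 / 2) * p)` and `2 * sin ((ℓ + 1 / 2) * p) * cos (p / 2)`.
For `0 < p < π` the factors in `p / 2` do not vanish, so the solutions are the zeros of cosine and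
sine at `(ℓ + 1 / 2) * p`, which ranges over `(0, (ℓ + 1 / 2) * π)`.
-/

open Real

theorem sin_eq_sin_iff_cos_half_add_eq_zero {x y : ℝ} (h : sin ((x - y) / 2) ≠ 0) :
    sin x = sin y ↔ cos ((x + y) / 2) = 0 := by
  rw [← sub_eq_zero, sin_sub_sin, mul_eq_zero_iff_left (mul_ne_zero two_ne_zero h)]

theorem sin_eq_neg_sin_iff_sin_half_add_eq_zero {x y : ℝ} (h : cos ((x - y) / 2) ≠ 0) :
    sin x = -sin y ↔ sin ((x + y) / 2) = 0 := by
  rw [eq_neg_iff_add_eq_zero, sin_add_sin, mul_eq_zero_iff_right h,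
    mul_eq_zero_iff_left two_ne_zero]

theorem sin_eq_zero_iff_of_mem_Ioo {n : ℕ} {x : ℝ} (hx : x ∈ Set.Ioo 0 ((n + 1) * π)) :
    sin x = 0 ↔ ∃ j : ℕ, 1 ≤ j ∧ j ≤ n ∧ x = j * π := by
  constructor
  · intro h
    obtain ⟨k, rfl⟩ := sin_eq_zero_iff.mp h
    have k_pos : 0 < k := by exact_mod_cast pos_of_mul_pos_left hx.1 pi_pos.le
    have k_lt : k < n + 1 := by exact_mod_cast lt_of_mul_lt_mul_right hx.2 pi_pos.le
    lift k to ℕ using k_pos.le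
    exact ⟨k, by lia, by lia, by simp⟩
  · rintro ⟨j, -, -, rfl⟩
    exact sin_nat_mul_pi j

theorem cos_eq_zero_iff_of_mem_Ioo {n : ℕ} {x : ℝ}
    (hx : x ∈ Set.Ioo (-(π / 2)) (n * π + π / 2)) :
    cos x = 0 ↔ ∃ j : ℕ, 1 ≤ j ∧ j ≤ n ∧ x = j * π - π / 2 := by
  have hx' : x + π / 2 ∈ Set.Ioo 0 ((n + 1) * π) := ⟨by linarith [hx.1], by linarith [hx.2]⟩
  simp only [← sin_add_pi_div_two, sin_eq_zero_iff_of_mem_Ioo hx', eq_sub_iff_add_eq]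

theorem quasimomenta_solutions_alpha_pm_one (ℓ : ℕ) (hℓ : 1 ≤ ℓ) (p : ℝ)
    (hp : p ∈ Set.Ioo 0 Real.pi) :
    (Real.sin ((ℓ + 1) * p) = Real.sin (ℓ * p) ↔
      ∃ j : ℕ, 1 ≤ j ∧ j ≤ ℓ ∧ p = (2 * (j : ℝ) - 1) * Real.pi / (2 * ℓ + 1)) ∧
    (Real.sin ((ℓ + 1) * p) = -Real.sin (ℓ * p) ↔
      ∃ j : ℕ, 1 ≤ j ∧ j ≤ ℓ ∧ p = 2 * (j : ℝ) * Real.pi / (2 * ℓ + 1)) := by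
  obtain ⟨p_pos, p_lt⟩ := hp
  have half_diff : ((ℓ + 1) * p - ℓ * p) / 2 = p / 2 := by ring
  have half_sum : ((ℓ + 1) * p + ℓ * p) / 2 = (2 * ℓ + 1) * p / 2 := by ring
  have sin_ne : sin (p / 2) ≠ 0 := (sin_pos_of_pos_of_lt_pi (by linarith) (by linarith)).ne'
  have cos_ne : cos (p / 2) ≠ 0 := (cos_pos_of_mem_Ioo ⟨by linarith, by linarith⟩).ne'
  have arg_pos : 0 < (2 * ℓ + 1) * p / 2 := by positivity
  have arg_lt : (2 * ℓ + 1) * p / 2 < ℓ * π + π / 2 := calc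
    (2 * ℓ + 1) * p / 2 < (2 * ℓ + 1) * π / 2 := by gcongr
    _ = ℓ * π + π / 2 := by ring
  have denom_ne : (2 * ℓ + 1 : ℝ) ≠ 0 := by positivity
  constructor
  · rw [sin_eq_sin_iff_cos_half_add_eq_zero (half_diff ▸ sin_ne), half_sum,
      cos_eq_zero_iff_of_mem_Ioo (n := ℓ) ⟨by linarith, arg_lt⟩]
    refine exists_congr fun j ↦ and_congr_right' (and_congr_right' ?_)
    rw [eq_div_iff denom_ne, div_eq_iff two_ne_zero]
    ring_nf
  · rw [sin_eq_neg_sin_iff_sin_half_add_eq_zero (half_diff ▸ cos_ne), half_sum,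
      sin_eq_zero_iff_of_mem_Ioo (n := ℓ) ⟨arg_pos, by linarith⟩]
    refine exists_congr fun j ↦ and_congr_right' (and_congr_right' ?_)
    rw [eq_div_iff denom_ne, div_eq_iff two_ne_zero]
    ring_nf
end

section
/- Let ℓ ≥ 1 be an integer, let α ∈ ℝ, and let p, q ∈ (0, π) be distinct points with sin(ℓp) ≠ 0, sin(ℓq) ≠ 0, sin((ℓ+1)p) = α·sin(ℓp), and sin((ℓ+1)q) = α·sin(ℓq). Then |p − q| ≥ π/(2ℓ+1). -/
/-!
Put `s = (p + q) / 2`, `d = |p - q| / 2` and `n = 2ℓ + 1`. Eliminating `α` from the two equations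
and applying product-to-sum formulas leaves `sin (n s) / sin s = sin (n d) / sin d`, where
`d < s < π - d`. If `d < π / (2n)` this is impossible: `x ↦ sin (n x) / sin x` is strictly
decreasing on `(0, π / n]`, and for `x` in `[π / (2n), π - π / (2n)]` its absolute value is at most
`1 / sin (π / (2n))`, its value at `π / (2n)`. The reflection `x ↦ π - x`, which preserves that
absolute value because `n` is an integer, reduces everything to `s ≤ π / 2`.
-/

open Real Set

theorem mul_cos_mul_mul_sin_lt {a x : ℝ} (ha : 1 < a) (hx : 0 < x) (hax : a * x ≤ π) :
    a * cos (a * x) * sin x < sin (a * x) * cos x := by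
  have hderiv (y : ℝ) : HasDerivAt (fun y ↦ a * cos (a * y) * sin y - sin (a * y) * cos y)
      ((1 - a ^ 2) * (sin (a * y) * sin y)) y := by
    have hlin : HasDerivAt (fun y ↦ a * y) a y := by simpa using (hasDerivAt_id y).const_mul a
    refine (((hlin.cos.const_mul a).mul (hasDerivAt_sin y)).sub
      (hlin.sin.mul (hasDerivAt_cos y))).congr_deriv ?_
    ring
  have hanti : StrictAntiOn (fun y ↦ a * cos (a * y) * sin y - sin (a * y) * cos y) (Icc 0 x) := by
    refine strictAntiOn_of_deriv_neg (convex_Icc 0 x) (by fun_prop) fun y hy ↦ ?_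
    rw [interior_Icc] at hy
    have hay : a * y < π := (mul_lt_mul_of_pos_left hy.2 (by linarith)).trans_le hax
    have hya : y < a * y := lt_mul_of_one_lt_left hy.1 ha
    have hsin : 0 < sin (a * y) * sin y :=
      mul_pos (sin_pos_of_pos_of_lt_pi (hy.1.trans hya) hay)
        (sin_pos_of_pos_of_lt_pi hy.1 (hya.trans hay))
    rw [(hderiv y).deriv]
    exact mul_neg_of_neg_of_pos (by nlinarith) hsin
  simpa [sub_neg] using hanti (left_mem_Icc.2 hx.le) (right_mem_Icc.2 hx.le) hx

theorem strictAntiOn_sin_mul_div_sin {a : ℝ} (ha : 1 < a) :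
    StrictAntiOn (fun x ↦ sin (a * x) / sin x) (Ioc 0 (π / a)) := by
  have ha₀ : 0 < a := by linarith
  have hsin {x : ℝ} (hx : x ∈ Ioc 0 (π / a)) : 0 < sin x :=
    sin_pos_of_pos_of_lt_pi hx.1 (hx.2.trans_lt (div_lt_self pi_pos ha))
  refine strictAntiOn_of_deriv_neg (convex_Ioc 0 _)
    (ContinuousOn.div (by fun_prop) (by fun_prop) fun x hx ↦ (hsin hx).ne') fun x hx ↦ ?_
  have hx' := interior_subset hx
  have hax : a * x ≤ π := (le_div_iff₀' ha₀).1 hx'.2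
  have hlin : HasDerivAt (fun y ↦ a * y) a x := by simpa using (hasDerivAt_id x).const_mul a
  rw [(hlin.sin.fun_div (hasDerivAt_sin x) (hsin hx').ne').deriv]
  refine div_neg_of_neg_of_pos ?_ (pow_pos (hsin hx') 2)
  linarith [mul_cos_mul_mul_sin_lt ha hx'.1 hax]

theorem abs_sin_mul_div_sin_lt {a d s : ℝ} (ha : 1 < a) (hd : 0 < d) (had : d < π / (2 * a))
    (hds : d < s) (hs : s ≤ π / 2) : |sin (a * s)| / sin s < sin (a * d) / sin d := by
  have ha₀ : 0 < a := by linarith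
  have hhalf : π / (2 * a) ≤ π / a := by gcongr; linarith
  have hanti {t : ℝ} (hdt : d < t) (ht : t ≤ π / (2 * a)) :
      sin (a * t) / sin t < sin (a * d) / sin d :=
    strictAntiOn_sin_mul_div_sin ha ⟨hd, had.le.trans hhalf⟩ ⟨hd.trans hdt, ht.trans hhalf⟩ hdt
  rcases le_total s (π / (2 * a)) with hst | hts
  · have has : a * s ≤ π := (le_div_iff₀' ha₀).1 (hst.trans hhalf)
    rw [abs_of_nonneg (sin_nonneg_of_nonneg_of_le_pi (by nlinarith) has)]
    exact hanti hds hst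
  · have ht : 0 < π / (2 * a) := hd.trans had
    have hsin_t : 0 < sin (π / (2 * a)) :=
      sin_pos_of_pos_of_lt_pi ht (by linarith [pi_pos])
    calc |sin (a * s)| / sin s
      _ ≤ 1 / sin (π / (2 * a)) := by
          gcongr
          · exact abs_sin_le_one _
          · exact sin_le_sin_of_le_of_le_pi_div_two (by linarith [pi_pos]) hs hts
      _ = sin (a * (π / (2 * a))) / sin (π / (2 * a)) := by
          rw [show a * (π / (2 * a)) = π / 2 by field_simp, sin_pi_div_two]
      _ < sin (a * d) / sin d := hanti had le_rfl

theorem abs_sin_natCast_mul_pi_sub (n : ℕ) (x : ℝ) : |sin (n * (π - x))| = |sin (n * x)| := by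
  rw [mul_sub, sin_nat_mul_pi_sub, abs_neg, abs_mul, abs_neg_one_pow, one_mul]

theorem abs_sin_natCast_mul_div_sin_lt {n : ℕ} {d s : ℝ} (hn : 1 < n) (hd : 0 < d)
    (hnd : d < π / (2 * n)) (hds : d < s) (hsd : s < π - d) :
    |sin (n * s)| / sin s < sin (n * d) / sin d := by
  have hn' : (1 : ℝ) < n := by exact_mod_cast hn
  rcases le_total s (π / 2) with hs | hs
  · exact abs_sin_mul_div_sin_lt hn' hd hnd hds hs
  · rw [← abs_sin_natCast_mul_pi_sub, ← sin_pi_sub s]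
    exact abs_sin_mul_div_sin_lt hn' hd hnd (by linarith) (by linarith)

theorem sin_add_one_mul_mul_sin_mul_sub (x s d : ℝ) :
    sin ((x + 1) * (s + d)) * sin (x * (s - d)) - sin ((x + 1) * (s - d)) * sin (x * (s + d)) =
      sin ((2 * x + 1) * s) * sin d - sin s * sin ((2 * x + 1) * d) := by
  have hprod (u v : ℝ) : sin u * sin v = (cos (u - v) - cos (u + v)) / 2 := by
    rw [← two_mul_sin_mul_sin]; ring
  simp only [hprod]
  ring_nf

theorem pi_div_le_sub_of_sin_eq_mul_sin {ℓ α p q : ℝ} {m : ℕ} (hm : 2 * ℓ = m) (hℓ : 0 < ℓ)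
    (hp : p < π) (hq : 0 < q) (hqp : q < p)
    (hep : sin ((ℓ + 1) * p) = α * sin (ℓ * p)) (heq : sin ((ℓ + 1) * q) = α * sin (ℓ * q)) :
    π / (2 * ℓ + 1) ≤ p - q := by
  by_contra! hlt
  obtain ⟨s, d, rfl, rfl⟩ : ∃ s d, p = s + d ∧ q = s - d :=
    ⟨(p + q) / 2, (p - q) / 2, by ring, by ring⟩
  have hd : 0 < d := by linarith
  have hsin_s : 0 < sin s := sin_pos_of_pos_of_lt_pi (by linarith) (by linarith)
  have hsin_d : 0 < sin d := sin_pos_of_pos_of_lt_pi hd (by linarith)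
  have hn : 2 * ℓ + 1 = (m + 1 : ℕ) := by rw [hm]; push_cast; rfl
  have hratio : sin ((2 * ℓ + 1) * s) / sin s = sin ((2 * ℓ + 1) * d) / sin d := by
    rw [div_eq_div_iff hsin_s.ne' hsin_d.ne', mul_comm _ (sin s), ← sub_eq_zero,
      ← sin_add_one_mul_mul_sin_mul_sub, hep, heq]
    ring
  rw [hn] at hlt hratio
  have hm₀ : 0 < m := by
    rw [← Nat.cast_pos (α := ℝ), ← hm]
    positivity
  have hdn : d < π / (2 * (m + 1 : ℕ)) := by
    rw [mul_comm, ← div_div]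
    linarith
  have hstrict := abs_sin_natCast_mul_div_sin_lt (Nat.succ_lt_succ hm₀) hd hdn
    (by linarith : d < s) (by linarith)
  rw [← hratio] at hstrict
  exact hstrict.not_ge (by gcongr; exact le_abs_self _)

theorem quasimomenta_solutions_gap_general {ℓ α p q : ℝ} {m : ℕ} (hm : 2 * ℓ = m) (hℓ : 0 < ℓ)
    (hp : p ∈ Ioo 0 π) (hq : q ∈ Ioo 0 π) (hpq : p ≠ q)
    (hep : sin ((ℓ + 1) * p) = α * sin (ℓ * p)) (heq : sin ((ℓ + 1) * q) = α * sin (ℓ * q)) :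
    |p - q| ≥ π / (2 * ℓ + 1) := by
  rcases hpq.lt_or_gt with h | h
  · rw [abs_sub_comm]
    exact (pi_div_le_sub_of_sin_eq_mul_sin hm hℓ hq.2 hp.1 h heq hep).trans (le_abs_self _)
  · exact (pi_div_le_sub_of_sin_eq_mul_sin hm hℓ hp.2 hq.1 h hep heq).trans (le_abs_self _)

theorem quasimomenta_solutions_gap (ℓ : ℕ) (hℓ : 1 ≤ ℓ) (α p q : ℝ)
    (hp : p ∈ Set.Ioo 0 Real.pi) (hq : q ∈ Set.Ioo 0 Real.pi) (hpq : p ≠ q)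
    (hsp : Real.sin (ℓ * p) ≠ 0) (hsq : Real.sin (ℓ * q) ≠ 0)
    (hep : Real.sin ((ℓ + 1) * p) = α * Real.sin (ℓ * p))
    (heq : Real.sin ((ℓ + 1) * q) = α * Real.sin (ℓ * q)) :
    |p - q| ≥ Real.pi / (2 * ℓ + 1) :=
  quasimomenta_solutions_gap_general (m := 2 * ℓ) (by push_cast; rfl) (by exact_mod_cast hℓ)
    hp hq hpq hep heq
end

section
/- Let ℓ ≥ 1 be an integer and let p ∈ (0, π) satisfy sin(ℓp) ≠ 0 and sin((ℓ+1)p) = α·sin(ℓp). If α ∈ [−1, 1], then p lies in the union over j = 1,…,ℓ of the closed intervals [(2j−1)π/(2ℓ+1), 2jπ/(2ℓ+1)]. If |α| > 1, then p lies in none of the open intervals ((2j−1)π/(2ℓ+1), 2jπ/(2ℓ+1)) for j = 1,…,ℓ. -/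
/-!
Since `sin² ((ℓ + 1) p) - sin² (ℓ p) = sin ((2 ℓ + 1) p) * sin p`, the quasimomenta equation gives
`sin ((2 ℓ + 1) p) * sin p = (α² - 1) * sin² (ℓ p)`. As `sin p > 0` and
`sin (ℓ p) ≠ 0`, we have `|α| ≤ 1` exactly when `sin ((2 ℓ + 1) p) ≤ 0`, and the intervals of the
theorem are those on which this last inequality holds.
-/

open Real Set

lemma sin_sq_sub_sin_sq (x y : ℝ) : sin x ^ 2 - sin y ^ 2 = sin (x + y) * sin (x - y) := by
  rw [sin_add, sin_sub]
  linear_combination sin y ^ 2 * sin_sq_add_cos_sq x - sin x ^ 2 * sin_sq_add_cos_sq y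

lemma sin_neg_of_mem_Ioo_int_mul_pi {x : ℝ} (k : ℤ)
    (hx : x ∈ Ioo ((2 * k - 1) * π) (2 * k * π)) : sin x < 0 := by
  rw [← sin_sub_int_mul_two_pi x k]
  exact sin_neg_of_neg_of_neg_pi_lt (by linarith [hx.2]) (by linarith [hx.1])

lemma exists_int_mem_Icc_of_sin_nonpos {x : ℝ} (hx : sin x ≤ 0) :
    ∃ k : ℤ, x ∈ Icc ((2 * k - 1) * π) (2 * k * π) := by
  obtain ⟨k, ⟨hlower, hupper⟩, -⟩ := existsUnique_sub_zsmul_mem_Ico two_pi_pos x (-π)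
  rw [zsmul_eq_mul] at hlower hupper
  refine ⟨k, by linarith, ?_⟩
  by_contra! hlt
  have hpos : 0 < sin (x - k * (2 * π)) :=
    sin_pos_of_pos_of_lt_pi (by linarith) (by linarith)
  rw [sin_sub_int_mul_two_pi] at hpos
  exact hpos.not_ge hx

section SinAdd

variable {x y α : ℝ}

lemma sin_ne_zero_of_sin_add_eq_mul (hy : sin y ≠ 0) (h : sin (x + y) = α * sin x) :
    sin x ≠ 0 := by
  intro hx
  have hcos : cos x ≠ 0 := fun hc => by simpa [hx, hc] using sin_sq_add_cos_sq x
  rw [sin_add, hx, zero_mul, zero_add, mul_zero] at h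
  exact mul_ne_zero hcos hy h

lemma sin_two_mul_add_mul_sin (h : sin (x + y) = α * sin x) :
    sin (2 * x + y) * sin y = (α ^ 2 - 1) * sin x ^ 2 := by
  calc
    sin (2 * x + y) * sin y = sin (x + y) ^ 2 - sin x ^ 2 := by
      rw [sin_sq_sub_sin_sq]; ring_nf
    _ = (α ^ 2 - 1) * sin x ^ 2 := by rw [h]; ring

lemma sin_two_mul_add_pos_iff (hy : 0 < sin y) (h : sin (x + y) = α * sin x) :
    0 < sin (2 * x + y) ↔ 1 < |α| := by
  have hx : 0 < sin x ^ 2 := sq_pos_of_ne_zero (sin_ne_zero_of_sin_add_eq_mul hy.ne' h)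
  calc
    0 < sin (2 * x + y) ↔ 0 < sin (2 * x + y) * sin y := (mul_pos_iff_of_pos_right hy).symm
    _ ↔ 0 < (α ^ 2 - 1) * sin x ^ 2 := by rw [sin_two_mul_add_mul_sin h]
    _ ↔ 0 < α ^ 2 - 1 := mul_pos_iff_of_pos_right hx
    _ ↔ 1 < |α| := by rw [sub_pos, one_lt_sq_iff_one_lt_abs]

end SinAdd

section Dilation

variable {c p : ℝ}

lemma exists_nat_mem_Icc_of_sin_mul_nonpos (hc : 0 < c) (hp : p ∈ Ioo 0 π)
    (h : sin (c * p) ≤ 0) :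
    ∃ j : ℕ, 1 ≤ j ∧ 2 * (j : ℝ) - 1 < c ∧
      p ∈ Icc ((2 * (j : ℝ) - 1) * π / c) (2 * (j : ℝ) * π / c) := by
  obtain ⟨k, hlower, hupper⟩ := exists_int_mem_Icc_of_sin_nonpos h
  have hk_pos : 0 < (k : ℝ) := by
    have : 0 < 2 * (k : ℝ) * π := (mul_pos hc hp.1).trans_le hupper
    simpa [pi_pos] using this
  have hk_lt : 2 * (k : ℝ) - 1 < c :=
    lt_of_mul_lt_mul_right (hlower.trans_lt (mul_lt_mul_of_pos_left hp.2 hc)) pi_pos.le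
  lift k to ℕ using by exact_mod_cast hk_pos.le
  rw [Int.cast_natCast] at hlower hupper hk_pos hk_lt
  exact ⟨k, by exact_mod_cast hk_pos, hk_lt, (div_le_iff₀' hc).2 hlower, (le_div_iff₀' hc).2 hupper⟩

lemma sin_mul_neg_of_mem_Ioo_int_mul_pi_div (hc : 0 < c) (k : ℤ)
    (hp : p ∈ Ioo ((2 * k - 1) * π / c) (2 * k * π / c)) : sin (c * p) < 0 :=
  sin_neg_of_mem_Ioo_int_mul_pi k ⟨(div_lt_iff₀' hc).1 hp.1, (lt_div_iff₀' hc).1 hp.2⟩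

end Dilation

theorem quasimomenta_solutions_location_general {ℓ α p : ℝ} (hℓ : 0 < 2 * ℓ + 1)
    (hp : p ∈ Ioo 0 π) (he : sin ((ℓ + 1) * p) = α * sin (ℓ * p)) :
    (|α| ≤ 1 →
      ∃ j : ℕ, 1 ≤ j ∧ (j : ℝ) < ℓ + 1 ∧
        p ∈ Icc ((2 * (j : ℝ) - 1) * π / (2 * ℓ + 1)) (2 * (j : ℝ) * π / (2 * ℓ + 1))) ∧
    (1 < |α| →
      ∀ j : ℕ, p ∉ Ioo ((2 * (j : ℝ) - 1) * π / (2 * ℓ + 1)) (2 * (j : ℝ) * π / (2 * ℓ + 1))) := by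
  have hsign : 0 < sin ((2 * ℓ + 1) * p) ↔ 1 < |α| := by
    rw [add_one_mul] at he
    rw [add_one_mul, mul_assoc]
    exact sin_two_mul_add_pos_iff (sin_pos_of_mem_Ioo hp) he
  refine ⟨fun hα => ?_, fun hα j hj => ?_⟩
  · obtain ⟨j, hj, hjℓ, hpj⟩ :=
      exists_nat_mem_Icc_of_sin_mul_nonpos hℓ hp (not_lt.1 (mt hsign.1 hα.not_gt))
    exact ⟨j, hj, by linarith, hpj⟩
  · have hneg : sin ((2 * ℓ + 1) * p) < 0 :=
      sin_mul_neg_of_mem_Ioo_int_mul_pi_div hℓ j (by rwa [Int.cast_natCast])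
    exact hneg.not_gt (hsign.2 hα)

theorem quasimomenta_solutions_location (ℓ : ℕ) (hℓ : 1 ≤ ℓ) (α p : ℝ)
    (hp : p ∈ Set.Ioo 0 Real.pi) (hs : Real.sin (ℓ * p) ≠ 0)
    (he : Real.sin ((ℓ + 1) * p) = α * Real.sin (ℓ * p)) :
    (α ∈ Set.Icc (-1 : ℝ) 1 →
      ∃ j : ℕ, 1 ≤ j ∧ j ≤ ℓ ∧
        p ∈ Set.Icc ((2 * (j : ℝ) - 1) * Real.pi / (2 * ℓ + 1))
          (2 * (j : ℝ) * Real.pi / (2 * ℓ + 1))) ∧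
    (1 < |α| →
      ∀ j : ℕ, 1 ≤ j → j ≤ ℓ →
        p ∉ Set.Ioo ((2 * (j : ℝ) - 1) * Real.pi / (2 * ℓ + 1))
          (2 * (j : ℝ) * Real.pi / (2 * ℓ + 1))) := by
  obtain ⟨hin, hout⟩ := quasimomenta_solutions_location_general (by positivity) hp he
  simp only [← Nat.cast_add_one, Nat.cast_lt, Nat.lt_add_one_iff] at hin
  exact ⟨fun hα => hin (abs_le.2 hα), fun hα j _ _ => hout hα j⟩
end

section
/- There exists a constant c > 0 such that for every integer ℓ ≥ 2 and every real α ≥ 0, the difference between the largest and the second largest eigenvalue of A_ℓ(α) is at least c·(1 + α)/ℓ². -/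
/-- The adjacency matrix of the path graph on vertices `1, …, ℓ`
(indexed here by `Fin ℓ`, vertex `j+1` for index `j`) with a self-loop of
weight `α` at the endpoint vertex `ℓ`. -/
def pathMatrixLoop (ℓ : ℕ) (α : ℝ) : Matrix (Fin ℓ) (Fin ℓ) ℝ :=
  Matrix.of fun i j =>
    (if (i : ℕ) + 1 = (j : ℕ) ∨ (j : ℕ) + 1 = (i : ℕ) then (1 : ℝ) else 0) +
    (if (i : ℕ) = ℓ - 1 ∧ (j : ℕ) = ℓ - 1 then α else 0)

/-- The largest element of a finite family of reals (e.g. the largest eigenvalue). -/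
noncomputable def maxEig {n : ℕ} (e : Fin n → ℝ) : ℝ := ⨆ i, e i

/-- The second largest element (with multiplicity) of a finite family of reals:
it is the smallest, over choices of a discarded index `i`, of the largest
remaining element. For `n ≥ 2` this equals the second entry of the family
sorted in decreasing order. -/
noncomputable def sndEig {n : ℕ} (e : Fin n → ℝ) : ℝ :=
  ⨅ i : Fin n, ⨆ j : {j : Fin n // j ≠ i}, e j

/-!
A test vector bounds `λ₁` from below, and the quadratic form restricted to a hyperplane bounds `λ₂`
from above. Both bounds come from the sine vector `v j = sin (j θ)`, which satisfies
`A v = 2 cos θ • v` except at the vertex `ℓ`, where `A v` exceeds `2 cos θ • v` by the defect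
`α sin (ℓ θ) - sin ((ℓ + 1) θ)`.

If the defect has the sign of `v ℓ`, then `2 cos θ ≤ λ₁`; this covers `θ = π / (ℓ + 1)` and, when
`1 ≤ α`, `θ = π / (2 ℓ + 1)`. If it has the opposite sign and `θ = π / k`, where `v` vanishes at the
vertex `k` only, then `λ₂ ≤ 2 cos θ`: a vector vanishing at `k` is a pointwise product `v * y`, and
`2 y i y j ≤ y i ^ 2 + y j ^ 2` can be inserted into its quadratic form because `v` does not change
sign along any edge. This covers `k = ℓ`, where the defect is multiplied by `v ℓ = 0`, and the least
`k ≥ (2 ℓ + 1) / 3` when `α ≤ 1`. The resulting differences of cosines are of order `1 / ℓ ^ 2`; for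
large `α` the bound `α ≤ λ₁` suffices.
-/

open Matrix Real

section GroundState

variable {ι : Type*} [Fintype ι] {A : Matrix ι ι ℝ}

lemma dotProduct_mulVec_mul_eq_sum_sub_sum (hA : A.IsSymm) (v y : ι → ℝ) :
    (v * y) ⬝ᵥ (A *ᵥ (v * y)) =
      ∑ i, y i ^ 2 * (v i * (A *ᵥ v) i) -
        (∑ i, ∑ j, A i j * (v i * v j) * (y i - y j) ^ 2) / 2 := by
  have hswap : ∑ i, ∑ j, A i j * (v i * v j) * y j ^ 2 =
      ∑ i, ∑ j, A i j * (v i * v j) * y i ^ 2 := by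
    rw [Finset.sum_comm]
    refine Finset.sum_congr rfl fun i _ => Finset.sum_congr rfl fun j _ => ?_
    rw [hA.apply i j, mul_comm (v j)]
  have hform : (v * y) ⬝ᵥ (A *ᵥ (v * y)) = ∑ i, ∑ j, A i j * (v i * v j) * (y i * y j) := by
    simp only [dotProduct, mulVec, Pi.mul_apply, Finset.mul_sum]
    exact Finset.sum_congr rfl fun i _ => Finset.sum_congr rfl fun j _ => by ring
  have hdiag : ∑ i, y i ^ 2 * (v i * (A *ᵥ v) i) = ∑ i, ∑ j, A i j * (v i * v j) * y i ^ 2 := by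
    simp only [dotProduct, mulVec, Finset.mul_sum]
    exact Finset.sum_congr rfl fun i _ => Finset.sum_congr rfl fun j _ => by ring
  have hsquare : ∑ i, ∑ j, A i j * (v i * v j) * (y i - y j) ^ 2 =
      ∑ i, ∑ j, A i j * (v i * v j) * y i ^ 2 + ∑ i, ∑ j, A i j * (v i * v j) * y j ^ 2 -
        2 * ∑ i, ∑ j, A i j * (v i * v j) * (y i * y j) := by
    simp only [Finset.mul_sum, ← Finset.sum_add_distrib, ← Finset.sum_sub_distrib]
    exact Finset.sum_congr rfl fun i _ => Finset.sum_congr rfl fun j _ => by ring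
  rw [hsquare, hswap, hform, hdiag]
  ring

lemma dotProduct_mulVec_le_of_mul_mulVec_le (hA : A.IsSymm) {v x : ι → ℝ} {μ : ℝ}
    (hsign : ∀ i j, i ≠ j → 0 ≤ A i j * (v i * v j))
    (hsuper : ∀ i, v i * (A *ᵥ v) i ≤ μ * v i ^ 2) (hx : ∀ i, v i = 0 → x i = 0) :
    x ⬝ᵥ (A *ᵥ x) ≤ μ * (x ⬝ᵥ x) := by
  obtain ⟨y, rfl⟩ : ∃ y, x = v * y := ⟨x / v, funext fun i => (mul_div_cancel_of_imp' (hx i)).symm⟩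
  have henergy : 0 ≤ ∑ i, ∑ j, A i j * (v i * v j) * (y i - y j) ^ 2 := by
    refine Finset.sum_nonneg fun i _ => Finset.sum_nonneg fun j _ => ?_
    rcases eq_or_ne i j with rfl | hij
    · simp
    · exact mul_nonneg (hsign i j hij) (sq_nonneg _)
  calc (v * y) ⬝ᵥ (A *ᵥ (v * y)) ≤ ∑ i, y i ^ 2 * (v i * (A *ᵥ v) i) := by
        rw [dotProduct_mulVec_mul_eq_sum_sub_sum hA]
        linarith
    _ ≤ ∑ i, y i ^ 2 * (μ * v i ^ 2) := by
        exact Finset.sum_le_sum fun i _ => mul_le_mul_of_nonneg_left (hsuper i) (sq_nonneg _)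
    _ = μ * ((v * y) ⬝ᵥ (v * y)) := by
        simp only [dotProduct, Pi.mul_apply, Finset.mul_sum]
        exact Finset.sum_congr rfl fun i _ => by ring

end GroundState

section Variational

variable {ι : Type*} [Fintype ι] [DecidableEq ι] {A : Matrix ι ι ℝ}

open scoped MatrixOrder in
lemma dotProduct_mulVec_le_of_eigenvalues_le (hA : A.IsHermitian) {M : ℝ}
    (hM : ∀ i, hA.eigenvalues i ≤ M) (x : ι → ℝ) : x ⬝ᵥ (A *ᵥ x) ≤ M * (x ⬝ᵥ x) := by
  have hle : A ≤ algebraMap ℝ (Matrix ι ι ℝ) M := by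
    refine le_algebraMap_of_spectrum_le (fun r hr => ?_) hA
    obtain ⟨i, rfl⟩ := hA.spectrum_real_eq_range_eigenvalues ▸ hr
    exact hM i
  have hnonneg := (Matrix.le_iff.1 hle).dotProduct_mulVec_nonneg x
  simpa [sub_mulVec, dotProduct_sub, Algebra.algebraMap_eq_smul_one, smul_mulVec] using hnonneg

lemma eigenvectorBasis_dotProduct_eigenvectorBasis (hA : A.IsHermitian) (i j : ι) :
    ⇑(hA.eigenvectorBasis i) ⬝ᵥ ⇑(hA.eigenvectorBasis j) = if i = j then 1 else 0 := by
  rw [← orthonormal_iff_ite.1 hA.eigenvectorBasis.orthonormal i j,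
    EuclideanSpace.inner_eq_star_dotProduct, star_trivial, dotProduct_comm]

lemma exists_sq_add_sq_pos_mul_add_mul_eq_zero (s t : ℝ) :
    ∃ p q : ℝ, 0 < p ^ 2 + q ^ 2 ∧ p * s + q * t = 0 := by
  by_cases hs : s = 0
  · exact ⟨1, 0, by norm_num, by simp [hs]⟩
  · exact ⟨-t, s, by positivity, by ring⟩

lemma min_eigenvalues_le_of_dotProduct_mulVec_le_on_ker (hA : A.IsHermitian)
    (φ : Module.Dual ℝ (ι → ℝ)) {μ : ℝ}
    (hφ : ∀ x, φ x = 0 → x ⬝ᵥ (A *ᵥ x) ≤ μ * (x ⬝ᵥ x)) {i j : ι} (hij : i ≠ j) :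
    min (hA.eigenvalues i) (hA.eigenvalues j) ≤ μ := by
  set b := hA.eigenvectorBasis
  obtain ⟨p, q, hpq, hker⟩ :=
    exists_sq_add_sq_pos_mul_add_mul_eq_zero (φ (b i)) (φ (b j))
  have hform := hφ (p • ⇑(b i) + q • ⇑(b j)) (by simpa using hker)
  simp only [mulVec_add, mulVec_smul, b, hA.mulVec_eigenvectorBasis, dotProduct_add,
    add_dotProduct, smul_dotProduct, dotProduct_smul, smul_eq_mul,
    eigenvectorBasis_dotProduct_eigenvectorBasis, if_neg hij, if_neg hij.symm, if_true] at hform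
  refine le_of_mul_le_mul_right ?_ hpq
  calc min (hA.eigenvalues i) (hA.eigenvalues j) * (p ^ 2 + q ^ 2)
      = min (hA.eigenvalues i) (hA.eigenvalues j) * p ^ 2 +
        min (hA.eigenvalues i) (hA.eigenvalues j) * q ^ 2 := mul_add _ _ _
    _ ≤ hA.eigenvalues i * p ^ 2 + hA.eigenvalues j * q ^ 2 := by
        gcongr
        · exact min_le_left _ _
        · exact min_le_right _ _
    _ ≤ μ * (p ^ 2 + q ^ 2) := by linarith

end Variational

section ExtremalEigenvalues

variable {n : ℕ}

lemma sndEig_le_of_min_le (hn : 2 ≤ n) {e : Fin n → ℝ} {μ : ℝ}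
    (he : ∀ i j, i ≠ j → min (e i) (e j) ≤ μ) : sndEig e ≤ μ := by
  have : Nontrivial (Fin n) := Fin.nontrivial_iff_two_le.2 hn
  obtain ⟨i, hi⟩ := Finite.exists_max e
  have : Nonempty {j : Fin n // j ≠ i} := nonempty_subtype.2 (exists_ne i)
  calc sndEig e ≤ ⨆ j : {j : Fin n // j ≠ i}, e j := ciInf_le (Set.finite_range _).bddBelow i
    _ ≤ μ := ciSup_le fun j => min_eq_right (hi j) ▸ he i j j.2.symm

variable {A : Matrix (Fin n) (Fin n) ℝ}

lemma sndEig_le_of_dotProduct_mulVec_le_on_ker (hn : 2 ≤ n) (hA : A.IsHermitian)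
    (φ : Module.Dual ℝ (Fin n → ℝ)) {μ : ℝ}
    (hφ : ∀ x, φ x = 0 → x ⬝ᵥ (A *ᵥ x) ≤ μ * (x ⬝ᵥ x)) : sndEig hA.eigenvalues ≤ μ :=
  sndEig_le_of_min_le hn fun _ _ => min_eigenvalues_le_of_dotProduct_mulVec_le_on_ker hA φ hφ

lemma le_maxEig_of_mul_le_dotProduct_mulVec (hA : A.IsHermitian) {μ : ℝ} {x : Fin n → ℝ}
    (hx : x ≠ 0) (hμ : μ * (x ⬝ᵥ x) ≤ x ⬝ᵥ (A *ᵥ x)) : μ ≤ maxEig hA.eigenvalues := by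
  have hxx : 0 < x ⬝ᵥ x := by simpa using dotProduct_star_self_pos_iff.2 hx
  refine le_of_mul_le_mul_right (hμ.trans ?_) hxx
  exact dotProduct_mulVec_le_of_eigenvalues_le hA
    (fun i => le_ciSup (Set.finite_range _).bddAbove i) x

lemma diag_le_maxEig (hA : A.IsHermitian) (i : Fin n) : A i i ≤ maxEig hA.eigenvalues :=
  le_maxEig_of_mul_le_dotProduct_mulVec hA (x := Pi.single i 1) (by simp) (by simp)

end ExtremalEigenvalues

section RealEstimates

lemma sin_pi_div_pos {x : ℝ} (hx : 1 < x) : 0 < sin (π / x) :=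
  sin_pos_of_pos_of_lt_pi (by positivity) (div_lt_self pi_pos hx)

lemma sin_le_sin_of_add_le_pi {x y : ℝ} (hx : 0 ≤ x) (hxy : x ≤ y) (hadd : x + y ≤ π) :
    sin x ≤ sin y := by
  have hsin : 0 ≤ sin ((y - x) / 2) :=
    sin_nonneg_of_nonneg_of_le_pi (by linarith) (by linarith)
  have hcos : 0 ≤ cos ((y + x) / 2) := cos_nonneg_of_mem_Icc ⟨by linarith, by linarith⟩
  have := sin_sub_sin y x
  linarith [mul_nonneg hsin hcos]

lemma sin_natCast_mul_pi_div_nonneg {m k : ℕ} (hmk : m ≤ k) : 0 ≤ sin (m * (π / k)) := by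
  refine sin_nonneg_of_nonneg_of_le_pi (by positivity) ?_
  rw [mul_div_left_comm]
  exact mul_le_of_le_one_right pi_nonneg (div_le_one_of_le₀ (by exact_mod_cast hmk) (by positivity))

lemma sin_mul_pi_div_mul_sin_succ_mul_pi_div_nonneg (k m : ℕ) :
    0 ≤ sin (m * (π / k)) * sin ((m + 1 : ℕ) * (π / k)) := by
  rcases k.eq_zero_or_pos with rfl | hk
  · simp
  have hshift (r : ℕ) : sin ((r + k * (m / k) : ℕ) * (π / k)) =
      (-1) ^ (m / k) * sin (r * (π / k)) := by
    rw [← sin_add_nat_mul_pi]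
    congr 1
    push_cast
    field_simp
  have hm := hshift (m % k)
  have hsucc := hshift (m % k + 1)
  rw [Nat.mod_add_div] at hm
  rw [add_right_comm, Nat.mod_add_div] at hsucc
  rw [hm, hsucc, mul_mul_mul_comm, ← mul_pow, neg_one_mul, neg_neg, one_pow, one_mul]
  exact mul_nonneg (sin_natCast_mul_pi_div_nonneg (Nat.mod_lt m hk).le)
    (sin_natCast_mul_pi_div_nonneg (Nat.mod_lt m hk))

lemma eq_of_sin_mul_pi_div_eq_zero {k m : ℕ} (hm : 0 < m) (hmk : m < 2 * k)
    (hsin : sin (m * (π / k)) = 0) : m = k := by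
  obtain ⟨z, hz⟩ := sin_eq_zero_iff.1 hsin
  have hk : (k : ℝ) ≠ 0 := by
    norm_cast
    lia
  have hzk : z * k = m := by
    field_simp at hz
    exact_mod_cast hz
  obtain rfl : z = 1 := by nlinarith
  lia

lemma two_div_pi_sq_mul_le_cos_sub_cos {a b : ℝ} (ha : 0 ≤ a) (hab : a ≤ b) (hadd : a + b ≤ π) :
    2 / π ^ 2 * (b ^ 2 - a ^ 2) ≤ cos a - cos b := by
  have hsum := mul_le_sin (x := (b + a) / 2) (by linarith) (by linarith)
  have hdiff := mul_le_sin (x := (b - a) / 2) (by linarith) (by linarith)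
  have hsum_nonneg : 0 ≤ 2 / π * ((b + a) / 2) := mul_nonneg (by positivity) (by linarith)
  have hdiff_nonneg : 0 ≤ 2 / π * ((b - a) / 2) := mul_nonneg (by positivity) (by linarith)
  calc 2 / π ^ 2 * (b ^ 2 - a ^ 2)
      = 2 * ((2 / π * ((b + a) / 2)) * (2 / π * ((b - a) / 2))) := by ring
    _ ≤ 2 * (sin ((b + a) / 2) * sin ((b - a) / 2)) := by
        have hprod := mul_le_mul hsum hdiff hdiff_nonneg (hsum_nonneg.trans hsum)
        linarith
    _ = cos a - cos b := by
        rw [← neg_sub (cos b), cos_sub_cos]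
        ring

lemma four_mul_le_two_mul_cos_pi_div_sub {x y : ℝ} (hy : 2 ≤ y) (hyx : y ≤ x) :
    4 * (1 / y ^ 2 - 1 / x ^ 2) ≤ 2 * cos (π / x) - 2 * cos (π / y) := by
  have hx : 0 < x := by linarith
  have hxy : π / x ≤ π / y := by gcongr
  have hhalf : π / y ≤ π / 2 := by gcongr
  have hcos := two_div_pi_sq_mul_le_cos_sub_cos (by positivity) hxy (by linarith)
  have hsq : 2 / π ^ 2 * ((π / y) ^ 2 - (π / x) ^ 2) = 2 * (1 / y ^ 2 - 1 / x ^ 2) := by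
    field_simp
  linarith

lemma one_div_sq_le_four_mul_one_div_sq_sub {x y : ℝ} (hx : 2 ≤ x) (hy : 0 < y)
    (hyx : 3 * y ≤ 2 * x + 3) : 1 / x ^ 2 ≤ 4 * (1 / y ^ 2 - 1 / (x + 1) ^ 2) := by
  have hxy : 81 / 49 * (1 / (x + 1) ^ 2) ≤ 1 / y ^ 2 := by
    rw [mul_one_div, div_le_div_iff₀ (by positivity) (by positivity)]
    nlinarith
  have hxx : 4 / 9 * (1 / x ^ 2) ≤ 1 / (x + 1) ^ 2 := by
    rw [mul_one_div, div_le_div_iff₀ (by positivity) (by positivity)]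
    nlinarith
  have hpos : 0 < 1 / x ^ 2 := by positivity
  linarith

end RealEstimates

namespace pathMatrixLoop

lemma mulVec_apply {ℓ : ℕ} (α : ℝ) {f : ℕ → ℝ} (hf : f 0 = 0) (i : Fin ℓ) :
    (pathMatrixLoop ℓ α *ᵥ fun j => f (j + 1)) i =
      f i + f (i + 2) + if (i : ℕ) + 1 = ℓ then α * f ℓ - f (ℓ + 1) else 0 := by
  let left (m : ℕ) : ℝ := if m + 1 = (i : ℕ) then f (m + 1) else 0
  let right (m : ℕ) : ℝ := if m = (i : ℕ) + 1 then f (m + 1) else 0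
  let loop (m : ℕ) : ℝ := if m = ℓ - 1 then if (i : ℕ) + 1 = ℓ then α * f (m + 1) else 0 else 0
  have hterm (j : Fin ℓ) : pathMatrixLoop ℓ α i j * f (j + 1) = left j + right j + loop j := by
    simp only [pathMatrixLoop, Matrix.of_apply]
    grind
  have hleft : ∑ m ∈ Finset.range ℓ, left m = f i := by
    have hsum := Finset.sum_range_succ' (fun m => if m = (i : ℕ) then f m else 0) ℓ
    rw [Finset.sum_ite_eq', if_pos (Finset.mem_range.2 (by lia)), hf, ite_self, add_zero] at hsum
    exact hsum.symm
  have hright : ∑ m ∈ Finset.range ℓ, right m = if (i : ℕ) + 1 < ℓ then f (i + 2) else 0 := by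
    simp [right, Finset.sum_ite_eq']
  have hloop : ∑ m ∈ Finset.range ℓ, loop m = if (i : ℕ) + 1 = ℓ then α * f ℓ else 0 := by
    have hℓ : 0 < ℓ := by lia
    simp [loop, Finset.sum_ite_eq', hℓ, Nat.sub_add_cancel hℓ]
  simp only [mulVec, dotProduct, hterm]
  rw [Fin.sum_univ_eq_sum_range (fun m => left m + right m + loop m), Finset.sum_add_distrib,
    Finset.sum_add_distrib, hleft, hright, hloop]
  grind

/-- The solution `j ↦ sin (j θ)` of the eigenvalue recurrence of the path for `2 cos θ` that
vanishes at `0`, restricted to the vertices `1, …, ℓ`; index `j` is vertex `j + 1`. -/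
noncomputable def sineVec (ℓ : ℕ) (θ : ℝ) (j : Fin ℓ) : ℝ := sin ((j + 1 : ℕ) * θ)

variable {ℓ : ℕ} {α θ : ℝ}

lemma mulVec_sineVec (i : Fin ℓ) :
    (pathMatrixLoop ℓ α *ᵥ sineVec ℓ θ) i = 2 * cos θ * sineVec ℓ θ i +
      if (i : ℕ) + 1 = ℓ then α * sin (ℓ * θ) - sin ((ℓ + 1 : ℕ) * θ) else 0 := by
  have hrec : sin ((i : ℕ) * θ) + sin ((i + 2 : ℕ) * θ) = 2 * cos θ * sineVec ℓ θ i := by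
    rw [sineVec, mul_right_comm, two_mul_sin_mul_cos]
    push_cast
    ring_nf
  rw [← hrec]
  exact mulVec_apply α (f := fun m => sin (m * θ)) (by simp) i

lemma sineVec_mul_mulVec_sineVec (i : Fin ℓ) :
    sineVec ℓ θ i * (pathMatrixLoop ℓ α *ᵥ sineVec ℓ θ) i = 2 * cos θ * sineVec ℓ θ i ^ 2 +
      if (i : ℕ) + 1 = ℓ then sin (ℓ * θ) * (α * sin (ℓ * θ) - sin ((ℓ + 1 : ℕ) * θ)) else 0 := by
  rw [mulVec_sineVec]
  split_ifs with hi
  · rw [sineVec, hi]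
    ring
  · ring

lemma two_mul_cos_le_maxEig (hℓ : 1 ≤ ℓ) (hH : (pathMatrixLoop ℓ α).IsHermitian)
    (hsin : sin θ ≠ 0) (hend : 0 ≤ sin (ℓ * θ) * (α * sin (ℓ * θ) - sin ((ℓ + 1 : ℕ) * θ))) :
    2 * cos θ ≤ maxEig hH.eigenvalues := by
  refine le_maxEig_of_mul_le_dotProduct_mulVec hH (x := sineVec ℓ θ) ?_ ?_
  · refine fun hzero => hsin ?_
    simpa [sineVec] using congrFun hzero ⟨0, hℓ⟩
  · rw [dotProduct, dotProduct, Finset.mul_sum]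
    refine Finset.sum_le_sum fun i _ => ?_
    rw [sineVec_mul_mulVec_sineVec, ← sq]
    split_ifs <;> linarith

lemma mul_sineVec_nonneg (k : ℕ) {i j : Fin ℓ} (hij : i ≠ j) :
    0 ≤ pathMatrixLoop ℓ α i j * (sineVec ℓ (π / k) i * sineVec ℓ (π / k) j) := by
  have hloop : ¬((i : ℕ) = ℓ - 1 ∧ (j : ℕ) = ℓ - 1) := fun h => hij (Fin.ext (h.1.trans h.2.symm))
  simp only [pathMatrixLoop, Matrix.of_apply, if_neg hloop, add_zero, ite_mul, one_mul, zero_mul]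
  split_ifs with hadj
  · rcases hadj with hadj | hadj
    · rw [sineVec, sineVec, ← hadj]
      exact sin_mul_pi_div_mul_sin_succ_mul_pi_div_nonneg k (i + 1)
    · rw [sineVec, sineVec, ← hadj, mul_comm]
      exact sin_mul_pi_div_mul_sin_succ_mul_pi_div_nonneg k (j + 1)
  · exact le_rfl

lemma sndEig_le_two_mul_cos_pi_div (hℓ : 2 ≤ ℓ) (hH : (pathMatrixLoop ℓ α).IsHermitian)
    {k : ℕ} (hk : k ≤ ℓ) (hℓk : ℓ < 2 * k)
    (hend : sin (ℓ * (π / k)) * (α * sin (ℓ * (π / k)) - sin ((ℓ + 1 : ℕ) * (π / k))) ≤ 0) :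
    sndEig hH.eigenvalues ≤ 2 * cos (π / k) := by
  let vertex : Fin ℓ := ⟨k - 1, by lia⟩
  have hzero (i : Fin ℓ) (hi : sineVec ℓ (π / k) i = 0) : i = vertex := by
    have := eq_of_sin_mul_pi_div_eq_zero (by lia) (by lia) hi
    exact Fin.ext (Nat.eq_sub_of_add_eq this)
  refine sndEig_le_of_dotProduct_mulVec_le_on_ker hℓ hH (LinearMap.proj vertex) fun x hx => ?_
  refine dotProduct_mulVec_le_of_mul_mulVec_le (isHermitian_iff_isSymm.1 hH)
    (fun i j => mul_sineVec_nonneg k) (fun i => ?_) (fun i hi => hzero i hi ▸ hx)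
  rw [sineVec_mul_mulVec_sineVec]
  split_ifs <;> linarith

lemma two_mul_cos_pi_div_add_one_le_maxEig (hℓ : 1 ≤ ℓ) (hα : 0 ≤ α)
    (hH : (pathMatrixLoop ℓ α).IsHermitian) :
    2 * cos (π / (ℓ + 1)) ≤ maxEig hH.eigenvalues := by
  have hℓ' : (1 : ℝ) ≤ ℓ := by exact_mod_cast hℓ
  refine two_mul_cos_le_maxEig hℓ hH (sin_pi_div_pos (by linarith)).ne' ?_
  have hnext : sin ((ℓ + 1 : ℕ) * (π / (ℓ + 1))) = 0 := by
    rw [Nat.cast_succ, mul_div_cancel₀ _ (by positivity), sin_pi]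
  rw [hnext, sub_zero, mul_left_comm]
  exact mul_nonneg hα (mul_self_nonneg _)

lemma two_mul_cos_pi_div_two_mul_add_one_le_maxEig (hℓ : 1 ≤ ℓ) (hα : 1 ≤ α)
    (hH : (pathMatrixLoop ℓ α).IsHermitian) :
    2 * cos (π / (2 * ℓ + 1)) ≤ maxEig hH.eigenvalues := by
  have hℓ' : (1 : ℝ) ≤ ℓ := by exact_mod_cast hℓ
  refine two_mul_cos_le_maxEig hℓ hH (sin_pi_div_pos (by linarith)).ne' ?_
  have hnext : sin ((ℓ + 1 : ℕ) * (π / (2 * ℓ + 1))) = sin (ℓ * (π / (2 * ℓ + 1))) := by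
    rw [← sin_pi_sub]
    congr 1
    push_cast
    field_simp
    ring
  rw [hnext, ← sub_one_mul, mul_left_comm]
  exact mul_nonneg (sub_nonneg.2 hα) (mul_self_nonneg _)

lemma weight_le_maxEig (hℓ : 1 ≤ ℓ) (hH : (pathMatrixLoop ℓ α).IsHermitian) :
    α ≤ maxEig hH.eigenvalues := by
  have hdiag := diag_le_maxEig hH ⟨ℓ - 1, by lia⟩
  simpa [pathMatrixLoop] using hdiag

lemma sndEig_le_two_mul_cos_pi_div_self (hℓ : 2 ≤ ℓ) (hH : (pathMatrixLoop ℓ α).IsHermitian) :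
    sndEig hH.eigenvalues ≤ 2 * cos (π / ℓ) := by
  refine sndEig_le_two_mul_cos_pi_div hℓ hH le_rfl (by lia) ?_
  have hlast : sin (ℓ * (π / ℓ)) = 0 := by
    rw [mul_div_cancel₀ _ (by positivity), sin_pi]
  rw [hlast, zero_mul]

lemma sndEig_le_two_mul_cos_pi_div_of_le_one (hℓ : 2 ≤ ℓ) (hα : α ≤ 1)
    (hH : (pathMatrixLoop ℓ α).IsHermitian) {k : ℕ} (hk : k ≤ ℓ) (hℓk : 2 * ℓ + 1 ≤ 3 * k) :
    sndEig hH.eigenvalues ≤ 2 * cos (π / k) := by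
  refine sndEig_le_two_mul_cos_pi_div hℓ hH hk (by lia) ?_
  have hk0 : (0 : ℝ) < k := by exact_mod_cast (by lia : 0 < k)
  have hk' : (k : ℝ) ≤ ℓ := by exact_mod_cast hk
  have hℓk' : 2 * (ℓ : ℝ) + 1 ≤ 3 * k := by exact_mod_cast hℓk
  have hb : 0 < π / k := by positivity
  have hπ : π = k * (π / k) := by field_simp
  set b := π / k
  have hlast : sin (ℓ * b) = -sin ((ℓ - k) * b) := by
    rw [sub_mul, ← hπ, sin_sub_pi, neg_neg]
  have hnext : sin ((ℓ + 1 : ℕ) * b) = -sin ((ℓ + 1 - k) * b) := by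
    rw [sub_mul, ← hπ, sin_sub_pi, neg_neg, Nat.cast_succ]
  have hnonneg : 0 ≤ sin ((ℓ - k) * b) :=
    sin_nonneg_of_nonneg_of_le_pi (mul_nonneg (by linarith) hb.le) (by nlinarith)
  have hmono : sin ((ℓ - k) * b) ≤ sin ((ℓ + 1 - k) * b) :=
    sin_le_sin_of_add_le_pi (mul_nonneg (by linarith) hb.le) (by nlinarith) (by nlinarith)
  have hweight : α * sin ((ℓ - k) * b) ≤ sin ((ℓ - k) * b) := mul_le_of_le_one_left hnonneg hα
  rw [hlast, hnext]
  exact mul_nonpos_of_nonpos_of_nonneg (by linarith) (by linarith)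

lemma one_div_sq_le_gap_of_le_one (hℓ : 2 ≤ ℓ) (hα₀ : 0 ≤ α) (hα₁ : α ≤ 1)
    (hH : (pathMatrixLoop ℓ α).IsHermitian) :
    1 / (ℓ : ℝ) ^ 2 ≤ maxEig hH.eigenvalues - sndEig hH.eigenvalues := by
  obtain ⟨k, hk_lower, hk_upper⟩ : ∃ k, 2 * ℓ + 1 ≤ 3 * k ∧ 3 * k ≤ 2 * ℓ + 3 :=
    ⟨2 * ℓ / 3 + 1, by lia, by lia⟩
  have hℓ' : (2 : ℝ) ≤ ℓ := by exact_mod_cast hℓ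
  have hk₂ : (2 : ℝ) ≤ k := by exact_mod_cast (by lia : 2 ≤ k)
  have hkℓ : (k : ℝ) ≤ ℓ + 1 := by exact_mod_cast (by lia : k ≤ ℓ + 1)
  have hmax := two_mul_cos_pi_div_add_one_le_maxEig (by lia) hα₀ hH
  have hsnd := sndEig_le_two_mul_cos_pi_div_of_le_one hℓ hα₁ hH (by lia) hk_lower
  calc 1 / (ℓ : ℝ) ^ 2 ≤ 4 * (1 / (k : ℝ) ^ 2 - 1 / ((ℓ : ℝ) + 1) ^ 2) :=
        one_div_sq_le_four_mul_one_div_sq_sub hℓ' (by linarith) (by exact_mod_cast hk_upper)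
    _ ≤ 2 * cos (π / (ℓ + 1)) - 2 * cos (π / k) := four_mul_le_two_mul_cos_pi_div_sub hk₂ hkℓ
    _ ≤ maxEig hH.eigenvalues - sndEig hH.eigenvalues := sub_le_sub hmax hsnd

lemma three_div_sq_le_gap_of_one_le (hℓ : 2 ≤ ℓ) (hα : 1 ≤ α)
    (hH : (pathMatrixLoop ℓ α).IsHermitian) :
    3 / (ℓ : ℝ) ^ 2 ≤ maxEig hH.eigenvalues - sndEig hH.eigenvalues := by
  have hℓ' : (2 : ℝ) ≤ ℓ := by exact_mod_cast hℓ
  have hmax := two_mul_cos_pi_div_two_mul_add_one_le_maxEig (by lia) hα hH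
  have hsnd := sndEig_le_two_mul_cos_pi_div_self hℓ hH
  calc 3 / (ℓ : ℝ) ^ 2 = 4 * (1 / (ℓ : ℝ) ^ 2 - 1 / (2 * ℓ) ^ 2) := by
        field_simp
        norm_num
    _ ≤ 4 * (1 / (ℓ : ℝ) ^ 2 - 1 / (2 * ℓ + 1) ^ 2) := by
        gcongr
        linarith
    _ ≤ 2 * cos (π / (2 * ℓ + 1)) - 2 * cos (π / ℓ) :=
        four_mul_le_two_mul_cos_pi_div_sub hℓ' (by linarith)
    _ ≤ maxEig hH.eigenvalues - sndEig hH.eigenvalues := sub_le_sub hmax hsnd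

lemma weight_sub_two_le_gap (hℓ : 2 ≤ ℓ) (hH : (pathMatrixLoop ℓ α).IsHermitian) :
    α - 2 ≤ maxEig hH.eigenvalues - sndEig hH.eigenvalues := by
  have hmax := weight_le_maxEig (by lia) hH
  have hsnd := sndEig_le_two_mul_cos_pi_div_self hℓ hH
  linarith [cos_le_one (π / ℓ)]

end pathMatrixLoop

theorem pathMatrixLoop_spectral_gap :
    ∃ c : ℝ, 0 < c ∧ ∀ ℓ : ℕ, 2 ≤ ℓ → ∀ α : ℝ, 0 ≤ α →
      ∀ hH : (pathMatrixLoop ℓ α).IsHermitian,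
        maxEig hH.eigenvalues - sndEig hH.eigenvalues ≥ c * (1 + α) / ℓ ^ 2 := by
  refine ⟨1 / 2, by norm_num, fun ℓ hℓ α hα hH => ?_⟩
  have hℓ' : (1 : ℝ) ≤ (ℓ : ℝ) ^ 2 := one_le_pow₀ (by exact_mod_cast (by lia : 1 ≤ ℓ))
  rcases le_total α 1 with hα₁ | hα₁
  · refine le_trans ?_ (pathMatrixLoop.one_div_sq_le_gap_of_le_one hℓ hα hα₁ hH)
    gcongr
    linarith
  rcases le_total α 5 with hα₅ | hα₅
  · refine le_trans ?_ (pathMatrixLoop.three_div_sq_le_gap_of_one_le hℓ hα₁ hH)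
    gcongr
    linarith
  · refine le_trans ?_ (pathMatrixLoop.weight_sub_two_le_gap hℓ hH)
    refine (div_le_self (by positivity) hℓ').trans ?_
    linarith
end

section
/- Let d ≥ 1 be an integer and let G be a finite simple graph that is acyclic (a forest) in which every vertex has degree at most d + 1. Then every eigenvalue λ of the adjacency matrix of G satisfies |λ| ≤ 2√d; equivalently, the spectral norm of the adjacency matrix of G is at most 2√d. -/
/-!
Root every component of the forest and weight a vertex at depth `k` by `(√d)⁻ᵏ`. Each vertex has
at most one neighbour that is not one level deeper, so with at most `d + 1` neighbours the weights
around a vertex of weight `x` add up to at most `√d * x + d * (x / √d) = 2 * √d * x`. By Schur's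
test a symmetric nonnegative kernel with a positive weight `f` satisfying `K f ≤ c f` has quadratic
form at most `c` on `ℓ²`, so every `ℓ²` eigenvector has an eigenvalue of modulus at most `c`.
-/

open Finset SimpleGraph
open scoped NNReal ENNReal

section SchurTest

variable {ι : Type*}

lemma two_mul_mul_le_sq_mul_div_add_sq_mul_div {x y : ℝ≥0} (hx : x ≠ 0) (hy : y ≠ 0) (a b : ℝ≥0) :
    2 * (a * b) ≤ a ^ 2 * (y / x) + b ^ 2 * (x / y) :=
  calc 2 * (a * b) = 2 * (a * y) * (b * x) / (x * y) := by field_simp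
    _ ≤ ((a * y) ^ 2 + (b * x) ^ 2) / (x * y) := by gcongr; exact two_mul_le_add_sq _ _
    _ = a ^ 2 * (y / x) + b ^ 2 * (x / y) := by field_simp

lemma tsum_tsum_mul_sq_mul_div_le {K : Matrix ι ι ℝ≥0∞} {f : ι → ℝ≥0} {c : ℝ≥0∞}
    (hf : ∀ i, f i ≠ 0) (hKf : ∀ i, ∑' j, K i j * f j ≤ c * f i) (g : ι → ℝ≥0) :
    ∑' i, ∑' j, K i j * ↑(g i ^ 2 * (f j / f i)) ≤ c * ∑' i, ↑(g i ^ 2) := by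
  rw [← ENNReal.tsum_mul_left]
  refine ENNReal.tsum_le_tsum fun i ↦ ?_
  calc ∑' j, K i j * ↑(g i ^ 2 * (f j / f i))
      = ↑(g i ^ 2 / f i) * ∑' j, K i j * f j := by
        rw [← ENNReal.tsum_mul_left]
        refine tsum_congr fun j ↦ ?_
        rw [mul_left_comm, ← ENNReal.coe_mul, div_mul_eq_mul_div, mul_div_assoc]
    _ ≤ ↑(g i ^ 2 / f i) * (c * f i) := by gcongr; exact hKf i
    _ = c * ↑(g i ^ 2) := by
        rw [mul_left_comm, ← ENNReal.coe_mul, div_mul_cancel₀ _ (hf i)]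

/-- Schur's test. -/
theorem tsum_tsum_mul_mul_le_of_tsum_mul_le {K : Matrix ι ι ℝ≥0∞} (hK : K.IsSymm) {f : ι → ℝ≥0}
    {c : ℝ≥0∞} (hf : ∀ i, f i ≠ 0) (hKf : ∀ i, ∑' j, K i j * f j ≤ c * f i) (g : ι → ℝ≥0) :
    ∑' i, ∑' j, K i j * ↑(g i * g j) ≤ c * ∑' i, ↑(g i ^ 2) := by
  have hswap : ∑' i, ∑' j, K i j * ↑(g j ^ 2 * (f i / f j)) =
      ∑' i, ∑' j, K i j * ↑(g i ^ 2 * (f j / f i)) := by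
    rw [ENNReal.tsum_comm]
    simp only [hK.apply]
  have hle := tsum_tsum_mul_sq_mul_div_le hf hKf g
  rw [← ENNReal.mul_le_mul_iff_right two_ne_zero ENNReal.ofNat_ne_top]
  calc 2 * ∑' i, ∑' j, K i j * ↑(g i * g j)
      = ∑' i, ∑' j, K i j * ↑(2 * (g i * g j)) := by
        simp only [← ENNReal.tsum_mul_left, ENNReal.coe_mul, ENNReal.coe_ofNat, mul_left_comm]
    _ ≤ ∑' i, ∑' j, K i j * ↑(g i ^ 2 * (f j / f i) + g j ^ 2 * (f i / f j)) := by
        gcongr with i j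
        exact two_mul_mul_le_sq_mul_div_add_sq_mul_div (hf i) (hf j) _ _
    _ = ∑' i, ∑' j, K i j * ↑(g i ^ 2 * (f j / f i)) +
          ∑' i, ∑' j, K i j * ↑(g i ^ 2 * (f j / f i)) := by
        simp only [ENNReal.coe_add, mul_add, ENNReal.tsum_add, hswap]
    _ ≤ 2 * (c * ∑' i, ↑(g i ^ 2)) := by rw [two_mul]; gcongr

end SchurTest

section LocallyFinite

variable {V : Type*} {G : SimpleGraph V} [G.LocallyFinite]

lemma tsum_adjMatrix_mul [DecidableRel G.Adj] (v : V) (g : V → ℝ≥0∞) :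
    ∑' u, G.adjMatrix ℝ≥0∞ v u * g u = ∑ u ∈ G.neighborFinset v, g u := by
  rw [tsum_eq_sum (s := G.neighborFinset v) fun u hu ↦ by
    rw [adjMatrix_apply, if_neg (by simpa using hu), zero_mul]]
  refine sum_congr rfl fun u hu ↦ ?_
  rw [adjMatrix_apply, if_pos (by simpa using hu), one_mul]

theorem tsum_mul_sum_neighborFinset_le {f : V → ℝ≥0} {c : ℝ≥0} (hf : ∀ v, f v ≠ 0)
    (hsum : ∀ v, ∑ u ∈ G.neighborFinset v, f u ≤ c * f v) (g : V → ℝ≥0) :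
    ∑' v, (↑(g v * ∑ u ∈ G.neighborFinset v, g u) : ℝ≥0∞) ≤ c * ∑' v, ↑(g v ^ 2) := by
  classical
  have hadj : ∀ v, ∑' u, G.adjMatrix ℝ≥0∞ v u * f u ≤ c * f v := fun v ↦ by
    rw [tsum_adjMatrix_mul]
    exact_mod_cast hsum v
  convert tsum_tsum_mul_mul_le_of_tsum_mul_le G.isSymm_adjMatrix hf hadj g using 3 with v
  rw [tsum_adjMatrix_mul, mul_sum, ENNReal.ofNNReal_finsetSum]

theorem nnnorm_eigenvalue_le_of_sum_neighborFinset_le {𝕜 : Type*} [NormedField 𝕜] {f : V → ℝ≥0}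
    {c : ℝ≥0} (hf : ∀ v, f v ≠ 0) (hsum : ∀ v, ∑ u ∈ G.neighborFinset v, f u ≤ c * f v)
    {μ : 𝕜} {w : V → 𝕜} (hw : w ≠ 0) (hw_sq : Summable fun v ↦ ‖w v‖ ^ 2)
    (heigen : ∀ v, ∑ u ∈ G.neighborFinset v, w u = μ * w v) :
    ‖μ‖₊ ≤ c := by
  have hpos : ∑' v, (↑(‖w v‖₊ ^ 2) : ℝ≥0∞) ≠ 0 := by
    simpa [ENNReal.tsum_eq_zero, funext_iff] using hw
  have hfin : ∑' v, (↑(‖w v‖₊ ^ 2) : ℝ≥0∞) ≠ ∞ := by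
    rw [ENNReal.tsum_coe_ne_top_iff_summable_coe]
    simpa using hw_sq
  rw [← ENNReal.coe_le_coe, ← ENNReal.mul_le_mul_iff_left hpos hfin]
  calc (‖μ‖₊ : ℝ≥0∞) * ∑' v, ↑(‖w v‖₊ ^ 2)
      = ∑' v, ↑(‖w v‖₊ * ‖∑ u ∈ G.neighborFinset v, w u‖₊) := by
        simp only [← ENNReal.tsum_mul_left, heigen, nnnorm_mul, ← ENNReal.coe_mul, sq,
          mul_left_comm]
    _ ≤ ∑' v, ↑(‖w v‖₊ * ∑ u ∈ G.neighborFinset v, ‖w u‖₊) := by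
        gcongr
        exact nnnorm_sum_le _ _
    _ ≤ c * ∑' v, ↑(‖w v‖₊ ^ 2) := tsum_mul_sum_neighborFinset_le hf hsum _

end LocallyFinite

section Depth

variable {V : Type*} {G : SimpleGraph V}

/-- The depth of a vertex once each connected component is rooted: the distance to the
representative of its component selected by `Quot.out`. -/
noncomputable def componentDepth (G : SimpleGraph V) (v : V) : ℕ :=
  G.dist (G.connectedComponentMk v).out v

lemma reachable_connectedComponentMk_out (v : V) :
    G.Reachable (G.connectedComponentMk v).out v :=
  ConnectedComponent.exact (Quot.out_eq _)

lemma componentDepth_eq_dist_of_adj {u v : V} (h : G.Adj v u) :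
    componentDepth G u = G.dist (G.connectedComponentMk v).out u := by
  rw [componentDepth, ConnectedComponent.connectedComponentMk_eq_of_adj h]

lemma componentDepth_le_add_one_of_adj {u v : V} (h : G.Adj v u) :
    componentDepth G v ≤ componentDepth G u + 1 := by
  have := h.diff_dist_adj (u := (G.connectedComponentMk v).out)
  rw [componentDepth_eq_dist_of_adj h, componentDepth]
  omega

lemma exists_forall_adj_ne_dist_eq_add_one (hG : G.IsAcyclic) {r v : V} (hr : G.Reachable r v) :
    ∃ p, ∀ u, G.Adj v u → u ≠ p → G.dist r u = G.dist r v + 1 := by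
  obtain ⟨P, hP, -⟩ := hr.exists_path_of_dist
  refine ⟨P.penultimate, fun u hvu hne ↦ ?_⟩
  refine (hG.dist_eq_dist_add_one_of_adj_of_reachable r hvu hr).resolve_left fun hcloser ↦ hne ?_
  obtain ⟨Q, hQ⟩ := (hr.trans hvu.reachable).exists_walk_length_eq_dist
  have hQv : (Q.concat hvu.symm).IsPath :=
    Walk.isPath_of_length_eq_dist _ (by rw [Walk.length_concat, hQ, hcloser])
  have hPQ : P = Q.concat hvu.symm :=
    congrArg Subtype.val ((hG.subsingleton_path r v).elim ⟨P, hP⟩ ⟨_, hQv⟩)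
  rw [hPQ, Walk.penultimate_concat]

lemma exists_forall_adj_ne_componentDepth_eq_add_one (hG : G.IsAcyclic) (v : V) :
    ∃ p, ∀ u, G.Adj v u → u ≠ p → componentDepth G u = componentDepth G v + 1 := by
  obtain ⟨p, hp⟩ :=
    exists_forall_adj_ne_dist_eq_add_one hG (reachable_connectedComponentMk_out v)
  exact ⟨p, fun u hvu hne ↦ (componentDepth_eq_dist_of_adj hvu).trans (hp u hvu hne)⟩

end Depth

lemma sum_add_le_add_card_nsmul {α M : Type*} [AddCommMonoid M] [PartialOrder M]
    [IsOrderedAddMonoid M] {s : Finset α} {g : α → M} {a b : M} (hba : b ≤ a) (p : α)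
    (ha : ∀ x ∈ s, g x ≤ a) (hb : ∀ x ∈ s, x ≠ p → g x ≤ b) :
    ∑ x ∈ s, g x + b ≤ a + #s • b := by
  classical
  by_cases hp : p ∈ s
  · have herase : ∑ x ∈ s.erase p, g x ≤ #(s.erase p) • b :=
      sum_le_card_nsmul _ _ _ fun x hx ↦ hb x (mem_of_mem_erase hx) (ne_of_mem_erase hx)
    rw [← add_sum_erase s g hp, ← card_erase_add_one hp, succ_nsmul, add_assoc]
    gcongr
    exact ha p hp
  · have hsum : ∑ x ∈ s, g x ≤ #s • b :=
      sum_le_card_nsmul _ _ _ fun x hx ↦ hb x hx (ne_of_mem_of_not_mem hx hp)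
    rw [add_comm]
    gcongr

lemma sum_inv_pow_componentDepth_le {V : Type*} {G : SimpleGraph V} (hG : G.IsAcyclic) {s : ℝ≥0}
    (hs : 1 ≤ s) {v : V} [Fintype (G.neighborSet v)] (hdeg : (G.degree v : ℝ≥0) ≤ s ^ 2 + 1) :
    ∑ u ∈ G.neighborFinset v, s⁻¹ ^ componentDepth G u ≤ 2 * s * s⁻¹ ^ componentDepth G v := by
  have hs0 : s ≠ 0 := (zero_lt_one.trans_le hs).ne'
  have hinv : s⁻¹ ≤ 1 := inv_le_one_of_one_le₀ hs
  set x := s⁻¹ ^ componentDepth G v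
  obtain ⟨p, hp⟩ := exists_forall_adj_ne_componentDepth_eq_add_one hG v
  have hdeeper : ∀ u ∈ G.neighborFinset v, u ≠ p → s⁻¹ ^ componentDepth G u ≤ s⁻¹ * x :=
    fun u hu hne ↦ by rw [hp u (by simpa using hu) hne, pow_succ']
  have hany : ∀ u ∈ G.neighborFinset v, s⁻¹ ^ componentDepth G u ≤ s * x := fun u hu ↦ by
    have hvu : G.Adj v u := by simpa using hu
    calc s⁻¹ ^ componentDepth G u = s * s⁻¹ ^ (componentDepth G u + 1) := by
          rw [pow_succ', mul_inv_cancel_left₀ hs0]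
      _ ≤ s * x := by
          gcongr s * ?_
          exact pow_le_pow_of_le_one zero_le hinv (componentDepth_le_add_one_of_adj hvu)
  have hle : s⁻¹ * x ≤ s * x := by gcongr; exact hinv.trans hs
  refine le_of_add_le_add_right (a := s⁻¹ * x) ?_
  calc ∑ u ∈ G.neighborFinset v, s⁻¹ ^ componentDepth G u + s⁻¹ * x
      ≤ s * x + G.degree v • (s⁻¹ * x) := sum_add_le_add_card_nsmul hle p hany hdeeper
    _ ≤ s * x + (s ^ 2 + 1) * (s⁻¹ * x) := by rw [nsmul_eq_mul]; gcongr
    _ = 2 * s * x + s⁻¹ * x := by field_simp; ring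

theorem forest_spectral_norm_bound_general {V 𝕜 : Type*} [NormedField 𝕜] {d : ℕ} (hd : 1 ≤ d)
    {G : SimpleGraph V} [G.LocallyFinite] (hacyclic : G.IsAcyclic)
    (hdeg : ∀ v, G.degree v ≤ d + 1) {μ : 𝕜} {w : V → 𝕜} (hw : w ≠ 0)
    (hw_sq : Summable fun v ↦ ‖w v‖ ^ 2)
    (heigen : ∀ v, ∑ u ∈ G.neighborFinset v, w u = μ * w v) :
    ‖μ‖ ≤ 2 * √d := by
  have hs : 1 ≤ NNReal.sqrt d := NNReal.one_le_sqrt.mpr (by exact_mod_cast hd)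
  have hweight : ∀ v, (NNReal.sqrt d)⁻¹ ^ componentDepth G v ≠ 0 :=
    fun v ↦ pow_ne_zero _ (inv_ne_zero (zero_lt_one.trans_le hs).ne')
  have hdeg_sq : ∀ v, (G.degree v : ℝ≥0) ≤ NNReal.sqrt d ^ 2 + 1 := fun v ↦ by
    rw [NNReal.sq_sqrt]
    exact_mod_cast hdeg v
  have hμ : ‖μ‖₊ ≤ 2 * NNReal.sqrt d :=
    nnnorm_eigenvalue_le_of_sum_neighborFinset_le hweight
      (fun v ↦ sum_inv_pow_componentDepth_le hacyclic hs (hdeg_sq v)) hw hw_sq heigen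
  simpa [← NNReal.coe_le_coe] using hμ

theorem forest_spectral_norm_bound {V : Type*} [Fintype V] [DecidableEq V]
    (d : ℕ) (hd : 1 ≤ d) (G : SimpleGraph V) [DecidableRel G.Adj]
    (hacyclic : G.IsAcyclic) (hdeg : ∀ v : V, G.degree v ≤ d + 1) :
    ∀ (μ : ℝ) (w : V → ℝ), w ≠ 0 → (G.adjMatrix ℝ).mulVec w = μ • w →
      |μ| ≤ 2 * Real.sqrt d := fun μ w hw heigen ↦
  forest_spectral_norm_bound_general hd hacyclic hdeg hw Summable.of_finite fun v ↦ by
    simpa using congrFun heigen v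
end

section
/- Let L ≥ 1 be an integer, let d ≥ 0 and γ, x ∈ ℝ, and let M be the (L+1)×(L+1) real symmetric matrix indexed by {0,1,…,L} with M_{j,j+1} = M_{j+1,j} = √d for 0 ≤ j ≤ L−1, M_{0,0} = γ, and all other entries 0. If γ·sinh((L+1)x) = √d·sinh((L+2)x), then the vector v with components v_j = sinh((L+1−j)x) for j = 0,…,L satisfies M·v = 2√d·cosh(x)·v. -/
/-- The adjacency matrix of a path on the `L+1` vertices `0, 1, …, L` with
uniform edge weight `√d` and a self-loop of weight `γ` at the root vertex `0`. -/
noncomputable def weightedPathMatrix (L : ℕ) (d γ : ℝ) :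
    Matrix (Fin (L + 1)) (Fin (L + 1)) ℝ :=
  Matrix.of fun i j =>
    (if (i : ℕ) + 1 = (j : ℕ) ∨ (j : ℕ) + 1 = (i : ℕ) then Real.sqrt d else 0) +
    (if (i : ℕ) = 0 ∧ (j : ℕ) = 0 then γ else 0)

/-!
Extend the vector to a sequence `f` on all of `ℤ`. Up to the factor `√d`, the path sends `f k` to
`f (k - 1) + f (k + 1)`, except that the end vertices `0` and `L` miss the contributions of the
ghost vertices `-1` and `L + 1`. Hence a solution of `f (k - 1) + f (k + 1) = μ * f k` restricts to
an eigenvector as soon as `f (L + 1) = 0` and the self-loop replaces the missing contribution at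
the root, `γ * f 0 = √d * f (-1)`. The sequence `f k = sinh ((L + 1 - k) * x)` solves the
recurrence with `μ = 2 * cosh x`, and the assumed relation for `γ` is the root condition.
-/

section

open Matrix SimpleGraph

theorem sum_fin_ite_intCast_eq {R : Type*} [AddCommMonoid R] (n : ℕ) (k : ℤ) (f : ℤ → R) :
    (∑ j : Fin n, if (j : ℤ) = k then f j else 0) = if 0 ≤ k ∧ k < n then f k else 0 := by
  split_ifs with hk
  · lift k to ℕ using hk.1
    have hkn : k < n := by exact_mod_cast hk.2
    have coe_eq_iff (j : Fin n) : (j : ℤ) = k ↔ j = ⟨k, hkn⟩ := by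
      rw [Fin.ext_iff, Nat.cast_inj]
    simp [coe_eq_iff]
  · refine Finset.sum_eq_zero fun j _ => if_neg ?_
    rintro rfl
    exact hk (by omega)

theorem pathGraph_adjMatrix_mulVec_apply {R : Type*} [NonAssocSemiring R] {n : ℕ}
    [DecidableRel (pathGraph n).Adj] (f : ℤ → R) (i : Fin n) :
    ((pathGraph n).adjMatrix R *ᵥ fun j => f j) i =
      (if (i : ℕ) = 0 then 0 else f ((i : ℤ) - 1)) +
        if (i : ℕ) + 1 = n then 0 else f ((i : ℤ) + 1) := by
  have split_neighbors (j : Fin n) :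
      (if (pathGraph n).Adj i j then f j else 0) =
        (if (j : ℤ) = (i : ℤ) - 1 then f j else 0) +
          if (j : ℤ) = (i : ℤ) + 1 then f j else 0 := by
    simp only [pathGraph_adj]
    grind
  rw [adjMatrix_mulVec_apply, neighborFinset_eq_filter, Finset.sum_filter]
  simp only [split_neighbors, Finset.sum_add_distrib, sum_fin_ite_intCast_eq]
  grind

theorem smul_pathGraph_adjMatrix_add_single_mulVec_eq_smul {R : Type*} [CommRing R] {n : ℕ}
    [DecidableRel (pathGraph (n + 1)).Adj] {w γ μ : R} {f : ℤ → R}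
    (recurrence : ∀ k, f (k - 1) + f (k + 1) = μ * f k)
    (root : γ * f 0 = w * f (-1)) (leaf : f (n + 1) = 0) :
    ((w • (pathGraph (n + 1)).adjMatrix R + Matrix.single 0 0 γ) *ᵥ
        fun j : Fin (n + 1) => f j) =
      (w * μ) • fun j : Fin (n + 1) => f j := by
  ext i
  have right_neighbor :
      (if (i : ℕ) + 1 = n + 1 then 0 else f ((i : ℤ) + 1)) = f ((i : ℤ) + 1) := by
    split_ifs with hi
    · rw [Nat.succ.inj hi, leaf]
    · rfl
  have left_neighbor_add_loop :
      w * (if (i : ℕ) = 0 then 0 else f ((i : ℤ) - 1)) +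
        (Matrix.single 0 0 γ *ᵥ fun j : Fin (n + 1) => f j) i = w * f ((i : ℤ) - 1) := by
    rcases eq_or_ne i 0 with rfl | hi
    · simp [single_mulVec, root]
    · simp [single_mulVec, hi]
  rw [add_mulVec, smul_mulVec, Pi.add_apply, Pi.smul_apply, Pi.smul_apply,
    pathGraph_adjMatrix_mulVec_apply, right_neighbor]
  simp only [smul_eq_mul]
  linear_combination left_neighbor_add_loop + w * recurrence i

theorem weightedPathMatrix_eq_smul_adjMatrix_add_single (L : ℕ) (d γ : ℝ)
    [DecidableRel (pathGraph (L + 1)).Adj] :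
    weightedPathMatrix L d γ =
      √d • (pathGraph (L + 1)).adjMatrix ℝ + Matrix.single 0 0 γ := by
  ext i j
  simp [weightedPathMatrix, pathGraph_adj, Matrix.single_apply, eq_comm (a := (0 : Fin (L + 1)))]

theorem sinh_add_add_sinh_sub (y x : ℝ) :
    Real.sinh (y + x) + Real.sinh (y - x) = 2 * Real.cosh x * Real.sinh y := by
  rw [Real.sinh_add, Real.sinh_sub]
  ring

end

theorem weighted_path_top_eigenvector (L : ℕ) (hL : 1 ≤ L) (d γ x : ℝ) (hd : 0 ≤ d)
    (h : γ * Real.sinh ((L + 1) * x) = Real.sqrt d * Real.sinh ((L + 2) * x)) :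
    (weightedPathMatrix L d γ).mulVec
        (fun j : Fin (L + 1) => Real.sinh (((L : ℝ) + 1 - (j : ℕ)) * x)) =
      (2 * Real.sqrt d * Real.cosh x) •
        fun j : Fin (L + 1) => Real.sinh (((L : ℝ) + 1 - (j : ℕ)) * x) := by
  let f : ℤ → ℝ := fun k => Real.sinh (((L : ℝ) + 1 - k) * x)
  have recurrence (k : ℤ) : f (k - 1) + f (k + 1) = 2 * Real.cosh x * f k := by
    rw [← sinh_add_add_sinh_sub]
    dsimp only [f]
    push_cast
    ring_nf
  have root : γ * f 0 = √d * f (-1) := by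
    convert h using 3 <;> push_cast <;> ring
  have leaf : f (L + 1) = 0 := by simp [f]
  classical
  have eigen := smul_pathGraph_adjMatrix_add_single_mulVec_eq_smul recurrence root leaf
  rw [← weightedPathMatrix_eq_smul_adjMatrix_add_single] at eigen
  simpa [f, mul_assoc, mul_left_comm] using eigen
end
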